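/- Let m := p−b−1 ≥ 1 and suppose ℓ = b+m+1 (= p). Then the trace of the linear endomorphism f ↦ ρ(g·f) of W equals (1/π_ℓ)·{ Σ_{k=0}^{m} ((b+1)_{m−k}/(m−k)!) · e_{ℓ−k}(n_1−1,…,n_ℓ−1) + (−1)^b }. -/

import Mathlib

open Finset MvPolynomial

noncomputable section

/-- Value of the elementary symmetric polynomial `e_k` at the family `v` restricted to `A`. -/
def esymVal {α F : Type*} [DecidableEq α] [CommRing F] (A : Finset α) (k : ℕ) (v : α → F) : F :=
  ∑ B ∈ A.powersetCard k, ∏ i ∈ B, v i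

/-- Pochhammer symbol `(a)_k = a (a+1) ⋯ (a+k-1)`. -/
def poch (a : ℚ) (k : ℕ) : ℚ := ∏ i ∈ Finset.range k, (a + (i : ℚ))

variable {p : ℕ}

/-- The index in `Fin (∑ t, n t)` of the `i`-th element of the `j`-th consecutive block. -/
def emb (n : Fin p → ℕ) (j : Fin p) (i : Fin (n j)) : Fin (∑ t, n t) :=
  ⟨(∑ t ∈ Finset.univ.filter (fun t => t < j), n t) + i, by
    have hj : j ∉ Finset.univ.filter (fun t => t < j) := by simp
    have h2 : ∑ t ∈ insert j (Finset.univ.filter (fun t => t < j)), n t ≤ ∑ t, n t :=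
      Finset.sum_le_sum_of_subset (Finset.subset_univ _)
    rw [Finset.sum_insert hj] at h2
    have := i.isLt
    omega⟩

/-- The Young subgroup: permutations mapping each block onto itself. -/
def youngGroup (n : Fin p → ℕ) : Finset (Equiv.Perm (Fin (∑ t, n t))) :=
  Finset.univ.filter fun w => ∀ (j : Fin p) (i : Fin (n j)), ∃ i' : Fin (n j),
    w (emb n j i) = emb n j i'

/-- The action of a permutation of the variables on polynomials, as a linear map. -/
def permAct {σ : Type*} (w : Equiv.Perm σ) :
    MvPolynomial σ ℚ →ₗ[ℚ] MvPolynomial σ ℚ :=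
  (MvPolynomial.rename ⇑w).toLinearMap

/-- Averaging operator over the Young subgroup. -/
def rho (n : Fin p → ℕ) :
    MvPolynomial (Fin (∑ t, n t)) ℚ →ₗ[ℚ] MvPolynomial (Fin (∑ t, n t)) ℚ :=
  ((youngGroup n).card : ℚ)⁻¹ • ∑ h ∈ youngGroup n, permAct h

/-- The alternating (Vandermonde) polynomial in the variables `x_{t 0}, …, x_{t b}`. -/
def Delta {N b : ℕ} (t : Fin (b + 1) → Fin N) : MvPolynomial (Fin N) ℚ :=
  ∏ q ∈ Finset.univ.filter (fun q : Fin (b + 1) × Fin (b + 1) => q.1 < q.2),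
    (X (t q.1) - X (t q.2))

/-- The span of all `Δ(x_{i₁},…,x_{i_{b+1}})` with `i₁ < ⋯ < i_{b+1}`. -/
def hookSpan (N b : ℕ) : Submodule ℚ (MvPolynomial (Fin N) ℚ) :=
  Submodule.span ℚ {f | ∃ t : Fin (b + 1) → Fin N, StrictMono t ∧ f = Delta t}

/-- The first `ℓ` block labels. -/
def firstL (p ℓ : ℕ) : Finset (Fin p) := Finset.univ.filter fun i => (i : ℕ) < ℓ


section Aux

set_option linter.unusedSectionVars false
set_option linter.unusedSimpArgs false

lemma trace_dual {M κ : Type*} [AddCommGroup M] [Module ℚ M] [Fintype κ] [DecidableEq κ]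
    (φ : κ → M →ₗ[ℚ] ℚ) (e : κ → M) (h : ∀ x, ∑ i, φ i x • e i = x) (T : M →ₗ[ℚ] M) :
    LinearMap.trace ℚ M T = ∑ i, φ i (T (e i)) := by
  classical
  let I : M →ₗ[ℚ] (κ → ℚ) := LinearMap.pi φ
  let P : (κ → ℚ) →ₗ[ℚ] M := Fintype.linearCombination ℚ e
  have hPI : P ∘ₗ I = LinearMap.id := by
    ext x
    simp [P, I, Fintype.linearCombination_apply, h]
  have hsurj : Function.Surjective P := fun x => ⟨I x, by
    have := LinearMap.congr_fun hPI x
    simpa using this⟩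
  have : Module.Finite ℚ M := Module.Finite.of_surjective P hsurj
  have h1 : T = P ∘ₗ (I ∘ₗ T) := by
    rw [← LinearMap.comp_assoc, hPI, LinearMap.id_comp]
  calc LinearMap.trace ℚ M T = LinearMap.trace ℚ M (P ∘ₗ (I ∘ₗ T)) := by rw [← h1]
    _ = LinearMap.trace ℚ (κ → ℚ) ((I ∘ₗ T) ∘ₗ P) := LinearMap.trace_comp_comm' _ _
    _ = _ := by
      rw [LinearMap.trace_eq_matrix_trace ℚ (Pi.basisFun ℚ κ), Matrix.trace]
      refine Finset.sum_congr rfl fun i _ => ?_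
      simp [LinearMap.toMatrix_apply, I, P, Fintype.linearCombination_apply, Pi.single_apply]

variable {α : Type*} [Fintype α] [DecidableEq α]

def Vand {c : ℕ} (u : Fin c → α) : MvPolynomial α ℚ :=
  (Matrix.vandermonde (fun i => (X (u i) : MvPolynomial α ℚ))).det

def Emat {c : ℕ} (s : Fin c → α) (u : Fin (c + 1) → α) : Matrix (Fin (c + 1)) (Fin (c + 1)) ℚ :=
  Matrix.of fun i j => (Fin.cons 1 (fun i' => if s i' = u j then 1 else 0) : Fin (c + 1) → ℚ) i

def Dmat {c : ℕ} (s : Fin c → α) (u : Fin c → α) : Matrix (Fin c) (Fin c) ℚ :=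
  Matrix.of fun i j => if s i = u j then 1 else 0

lemma Vand_perm {c : ℕ} (u : Fin c → α) (σ : Equiv.Perm (Fin c)) :
    Vand (u ∘ σ) = ((Equiv.Perm.sign σ : ℤ) : MvPolynomial α ℚ) * Vand u := by
  unfold Vand
  rw [← Matrix.det_permute]
  rfl

lemma Emat_perm {c : ℕ} (s : Fin c → α) (u : Fin (c + 1) → α) (σ : Equiv.Perm (Fin (c + 1))) :
    (Emat s (u ∘ σ)).det = ((Equiv.Perm.sign σ : ℤ) : ℚ) * (Emat s u).det := by
  rw [← Matrix.det_permute']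
  rfl

lemma Dmat_perm {c : ℕ} (s : Fin c → α) (u : Fin c → α) (σ : Equiv.Perm (Fin c)) :
    (Dmat s (u ∘ σ)).det = ((Equiv.Perm.sign σ : ℤ) : ℚ) * (Dmat s u).det := by
  rw [← Matrix.det_permute']
  rfl

lemma Vand_update_sum {c : ℕ} (u : Fin (c + 1) → α) (z : α) :
    ∑ j, Vand (Function.update u j z) = Vand u := by
  have h := congrFun (Matrix.mulVec_cramer
    (Matrix.vandermonde (fun i => (X (u i) : MvPolynomial α ℚ))).transpose
    (fun k => (X z : MvPolynomial α ℚ) ^ (k : ℕ))) 0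
  simp only [Matrix.mulVec, dotProduct, Matrix.transpose_apply, Matrix.vandermonde_apply,
    Fin.val_zero, pow_zero, one_mul, Matrix.det_transpose, Pi.smul_apply, smul_eq_mul,
    mul_one] at h
  unfold Vand
  rw [← h]
  refine Finset.sum_congr rfl fun j _ => ?_
  rw [Matrix.cramer_apply, ← Matrix.det_transpose]
  congr 1
  ext i k
  simp only [Matrix.transpose_apply, Matrix.vandermonde_apply, Matrix.updateCol_apply,
    Function.update_apply]
  split_ifs <;> rfl

lemma sum_perm_zero {R : Type*} [CommRing R] {c : ℕ} (f : Fin (c + 1) → R) :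
    ∑ σ : Equiv.Perm (Fin (c + 1)), f (σ 0) = (c.factorial : R) * ∑ j, f j := by
  rw [← (Equiv.Perm.decomposeFin (n := c)).symm.sum_comp, Fintype.sum_prod_type, Finset.mul_sum]
  refine Finset.sum_congr rfl fun j _ => ?_
  simp [Fintype.card_perm]

lemma Emat_det {c : ℕ} (s : Fin c → α) (u : Fin (c + 1) → α) :
    (Emat s u).det = ∑ σ : Equiv.Perm (Fin (c + 1)), ((Equiv.Perm.sign σ : ℤ) : ℚ) *
      if s = (fun i => u (σ i.succ)) then 1 else 0 := by
  rw [← Matrix.det_transpose, Matrix.det_apply']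
  refine Finset.sum_congr rfl fun σ _ => ?_
  congr 1
  rw [Fin.prod_univ_succ]
  simp only [Emat, Matrix.transpose_apply, Matrix.of_apply, Fin.cons_zero, Fin.cons_succ, one_mul,
    funext_iff]
  rw [Finset.prod_ite_zero]
  simp

lemma Vand_repro {c : ℕ} (u : Fin (c + 1) → α) (z : α) :
    ∑ s : Fin c → α, (Emat s u).det • Vand (Fin.cons z s : Fin (c + 1) → α)
      = (c.factorial : ℚ) • Vand u := by
  have h1 : ∀ σ : Equiv.Perm (Fin (c + 1)),
      (((Equiv.Perm.sign σ : ℤ) : ℚ)) • Vand (Fin.cons z (fun i => u (σ i.succ)) : Fin (c + 1) → α)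
        = Vand (Function.update u (σ 0) z) := by
    intro σ
    have : (Fin.cons z (fun i => u (σ i.succ)) : Fin (c + 1) → α)
        = Function.update u (σ 0) z ∘ σ := by
      ext i
      refine Fin.cases ?_ (fun i => ?_) i
      · simp
      · simp [Function.update_apply]
    rw [this, Vand_perm, MvPolynomial.smul_eq_C_mul, ← mul_assoc]
    rcases Int.units_eq_one_or (Equiv.Perm.sign σ) with h | h <;> simp [h]
  calc _ = ∑ s : Fin c → α, ∑ σ : Equiv.Perm (Fin (c + 1)), (if s = (fun i => u (σ i.succ)) then
        (((Equiv.Perm.sign σ : ℤ) : ℚ)) • Vand (Fin.cons z s : Fin (c + 1) → α) else 0) := by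
        refine Finset.sum_congr rfl fun s _ => ?_
        rw [Emat_det, Finset.sum_smul]
        refine Finset.sum_congr rfl fun σ _ => ?_
        split_ifs <;> simp
    _ = ∑ σ : Equiv.Perm (Fin (c + 1)), Vand (Function.update u (σ 0) z) := by
        rw [Finset.sum_comm]
        refine Finset.sum_congr rfl fun σ _ => ?_
        rw [Finset.sum_ite_eq' , if_pos (Finset.mem_univ _), h1]
    _ = _ := by
        rw [sum_perm_zero (fun j => Vand (Function.update u j z)), Vand_update_sum,
          MvPolynomial.smul_eq_C_mul]
        simp

lemma Vand_zero {c : ℕ} (u : Fin c → α) (hu : ¬ Function.Injective u) : Vand u = 0 := by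
  simp only [Function.Injective, not_forall] at hu
  obtain ⟨i, j, hij, hne⟩ := hu
  exact Matrix.det_zero_of_row_eq hne (by
    funext k
    simp [Matrix.vandermonde_apply, hij])

lemma Emat_zero {c : ℕ} (s : Fin c → α) (u : Fin (c + 1) → α) (hu : ¬ Function.Injective u) :
    (Emat s u).det = 0 := by
  simp only [Function.Injective, not_forall] at hu
  obtain ⟨i, j, hij, hne⟩ := hu
  exact Matrix.det_zero_of_column_eq hne (by
    intro k
    simp [Emat, hij])

lemma Emat_zero' {c : ℕ} (s : Fin c → α) (u : Fin (c + 1) → α) (hu : ¬ Function.Injective s) :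
    (Emat s u).det = 0 := by
  simp only [Function.Injective, not_forall] at hu
  obtain ⟨i, j, hij, hne⟩ := hu
  exact Matrix.det_zero_of_row_eq (i := i.succ) (j := j.succ) (by simpa using hne) (by
    funext k
    simp [Emat, hij])

def expo {c : ℕ} (s : Fin c → α) : α →₀ ℕ := ∑ i, Finsupp.single (s i) ((i : ℕ) + 1)

def phi {c : ℕ} (s : Fin c → α) : MvPolynomial α ℚ →ₗ[ℚ] ℚ :=
  open Classical in if Function.Injective s then MvPolynomial.lcoeff ℚ (expo s) else 0

lemma expo_apply {c : ℕ} (s : Fin c → α) (hs : Function.Injective s) (i : Fin c) :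
    expo s (s i) = i + 1 := by
  rw [expo, Finsupp.finsetSum_apply, Finset.sum_eq_single i]
  · simp
  · intro j _ hj
    rw [Finsupp.single_eq_of_ne]
    exact fun h => hj (hs h).symm
  · simp

lemma expo_inj {c : ℕ} (s t : Fin c → α) (hs : Function.Injective s) (ht : Function.Injective t)
    (h : expo s = expo t) : s = t := by
  ext i
  have h1 := expo_apply s hs i
  rw [h] at h1
  by_cases hex : ∃ j, t j = s i
  · obtain ⟨j, hj⟩ := hex
    rw [← hj, expo_apply t ht] at h1
    have : j = i := Fin.ext (by omega)
    rw [← hj, this]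
  · push Not at hex
    simp [expo, Finsupp.single_apply, hex] at h1

lemma phi_Vand {c : ℕ} (s : Fin c → α) (u : Fin (c + 1) → α) :
    phi s (Vand u) = (Emat s u).det := by
  classical
  by_cases hu : Function.Injective u
  swap
  · rw [Vand_zero u hu, Emat_zero s u hu, map_zero]
  by_cases hs : Function.Injective s
  swap
  · rw [Emat_zero' s u hs, phi, if_neg hs, LinearMap.zero_apply]
  rw [phi, if_pos hs, Emat_det, Vand, Matrix.det_apply, map_sum]
  refine Finset.sum_congr rfl fun σ _ => ?_
  have hprod : ∏ i, Matrix.vandermonde (fun i => (X (u i) : MvPolynomial α ℚ)) (σ i) i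
      = monomial (expo (fun i : Fin c => u (σ i.succ))) 1 := by
    rw [Fin.prod_univ_succ, expo, MvPolynomial.monomial_sum_one]
    simp [Matrix.vandermonde_apply, MvPolynomial.X_pow_eq_monomial]
  rw [hprod, Units.smul_def, map_zsmul, MvPolynomial.lcoeff_apply, MvPolynomial.coeff_monomial,
    zsmul_eq_mul]
  congr 1
  have hinj : Function.Injective (fun i : Fin c => u (σ i.succ)) :=
    hu.comp (σ.injective.comp (Fin.succ_injective c))
  by_cases h : s = fun i : Fin c => u (σ i.succ)
  · rw [if_pos h, if_pos (by rw [h])]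
  · rw [if_neg h, if_neg (fun h' => h (expo_inj _ _ hinj hs h').symm)]

/-- `X_c(w)` and `Y_c(w)`. -/
def XX (c : ℕ) (w : Equiv.Perm α) : ℚ :=
  ∑ u : Fin (c + 1) → α, (Emat (Fin.tail u) (w ∘ u)).det

def YY (c : ℕ) (w : Equiv.Perm α) : ℚ :=
  ∑ u : Fin c → α, (Dmat u (w ∘ u)).det

lemma XX_zero (w : Equiv.Perm α) : XX 0 w = Fintype.card α := by
  simp [XX, Emat]

lemma YY_zero (w : Equiv.Perm α) : YY 0 w = 1 := by
  simp [YY, Dmat]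

lemma Emat_cons {c : ℕ} (s : Fin (c + 1) → α) (z : α) (y : Fin (c + 1) → α) :
    (Emat s (Fin.cons z y : Fin (c + 2) → α)).det = (Dmat s y).det
      - ∑ i : Fin (c + 1), (-1) ^ (i : ℕ) * (if s i = z then 1 else 0)
          * (Emat (fun k => s (i.succAbove k)) y).det := by
  rw [Matrix.det_succ_column_zero, Fin.sum_univ_succ, sub_eq_add_neg, ← Finset.sum_neg_distrib]
  congr 1
  · simp only [Fin.val_zero, pow_zero, one_mul, Fin.succAbove_zero]
    have : Emat s (Fin.cons z y : Fin (c + 2) → α) 0 0 = 1 := by simp [Emat]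
    rw [this, one_mul]
    congr 1
  · refine Finset.sum_congr rfl fun i _ => ?_
    have : Emat s (Fin.cons z y : Fin (c + 2) → α) i.succ 0 = if s i = z then 1 else 0 := by
      simp [Emat]
    rw [this]
    have h2 : (Emat s (Fin.cons z y : Fin (c + 2) → α)).submatrix i.succ.succAbove Fin.succ
        = Emat (fun k => s (i.succAbove k)) y := by
      ext a k
      refine Fin.cases ?_ (fun a => ?_) a
      · simp [Emat]
      · simp [Emat]
    rw [h2, Fin.val_succ, pow_succ]
    ring

lemma XX_succ (c : ℕ) (w : Equiv.Perm α) :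
    XX (c + 1) w = Fintype.card α * YY (c + 1) w - (c + 1) * XX c w := by
  have h0 : XX (c + 1) w = ∑ z : α, ∑ s : Fin (c + 1) → α,
      (Emat s (Fin.cons z (w ∘ s) : Fin (c + 2) → α)).det := by
    rw [XX, ← (Fin.consEquiv (fun _ : Fin (c + 2) => α)).sum_comp, Fintype.sum_prod_type]
    refine Eq.trans ?_ (Equiv.sum_comp w (fun z => ∑ s : Fin (c + 1) → α,
      (Emat s (Fin.cons z (w ∘ s) : Fin (c + 2) → α)).det))
    refine Finset.sum_congr rfl fun z _ => Finset.sum_congr rfl fun s _ => ?_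
    congr 2
    ext i
    refine Fin.cases ?_ (fun i => ?_) i <;> simp [Fin.consEquiv]
  have h1 : ∀ i : Fin (c + 1), ∑ s : Fin (c + 1) → α,
      (-1) ^ (i : ℕ) * (Emat (fun k => s (i.succAbove k)) (w ∘ s)).det = XX c w := by
    intro i
    symm
    rw [XX, ← (Equiv.arrowCongr i.cycleRange (Equiv.refl α)).sum_comp]
    refine Finset.sum_congr rfl fun s _ => ?_
    have e1 : ((i.cycleRange).arrowCongr (Equiv.refl α)) s = s ∘ i.cycleRange.symm := by
      ext; simp
    rw [e1]
    have e2 : Fin.tail (s ∘ i.cycleRange.symm) = fun k => s (i.succAbove k) := by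
      ext k
      simp [Fin.tail]
    rw [e2, ← Function.comp_assoc, Emat_perm, Equiv.Perm.sign_symm, Fin.sign_cycleRange]
    simp
  rw [h0]
  simp_rw [Emat_cons]
  simp_rw [Finset.sum_sub_distrib]
  rw [Finset.sum_const, Finset.card_univ, nsmul_eq_mul, YY]
  congr 1
  rw [Finset.sum_comm]
  simp_rw [Finset.sum_comm (s := (Finset.univ : Finset α))]
  simp only [mul_ite, mul_one, mul_zero, ite_mul, zero_mul, Finset.sum_ite_eq, Finset.mem_univ,
    if_true]
  rw [Finset.sum_comm]
  simp_rw [h1]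
  simp

end Aux
section TraceHook

lemma Delta_eq {N b : ℕ} : ∃ ε : ℚ, ε ≠ 0 ∧ ∀ t : Fin (b + 1) → Fin N, Delta t = ε • Vand t := by
  refine ⟨(-1) ^ (Finset.univ.filter (fun q : Fin (b + 1) × Fin (b + 1) => q.1 < q.2)).card,
    pow_ne_zero _ (by norm_num), fun t => ?_⟩
  have h : Vand t = ∏ q ∈ Finset.univ.filter (fun q : Fin (b + 1) × Fin (b + 1) => q.1 < q.2),
      (X (t q.2) - X (t q.1) : MvPolynomial (Fin N) ℚ) := by
    rw [Vand, Matrix.det_vandermonde, Finset.prod_filter, Fintype.prod_prod_type]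
    refine Finset.prod_congr rfl fun i _ => ?_
    rw [← Finset.prod_filter]
    refine Finset.prod_congr ?_ fun j _ => rfl
    ext j; simp
  rw [h, MvPolynomial.smul_eq_C_mul, map_pow, map_neg, map_one, Delta, ← Finset.prod_const,
    ← Finset.prod_mul_distrib]
  refine Finset.prod_congr rfl fun q _ => ?_
  ring

lemma Vand_mem {N b : ℕ} (u : Fin (b + 1) → Fin N) : Vand u ∈ hookSpan N b := by
  by_cases hu : Function.Injective u
  swap
  · rw [Vand_zero u hu]; exact Submodule.zero_mem _
  obtain ⟨ε, hε, h⟩ := Delta_eq (N := N) (b := b)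
  let σ := Tuple.sort u
  have hm : StrictMono (u ∘ σ) := (Tuple.monotone_sort u).strictMono_of_injective
    (hu.comp σ.injective)
  have h1 : Vand (u ∘ σ) ∈ hookSpan N b := by
    have : Delta (u ∘ σ) ∈ hookSpan N b := Submodule.subset_span ⟨_, hm, rfl⟩
    rw [h] at this
    exact (Submodule.smul_mem_iff _ hε).1 this
  rw [Vand_perm] at h1
  rcases Int.units_eq_one_or (Equiv.Perm.sign σ) with h | h <;> simpa [h] using h1

lemma rename_Vand {N c : ℕ} (w : Equiv.Perm (Fin N)) (u : Fin c → Fin N) :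
    permAct w (Vand u) = Vand (w ∘ u) := by
  simp only [permAct, Vand, AlgHom.toLinearMap_apply]
  rw [AlgHom.map_det]
  congr 1
  ext i j
  simp [Matrix.vandermonde_apply]

lemma trace_hook (p b : ℕ) (n : Fin p → ℕ) (hN : 0 < ∑ t, n t)
    (g : Equiv.Perm (Fin (∑ t, n t)))
    (hW : ∀ f ∈ hookSpan (∑ t, n t) b,
      ((rho n).comp (permAct g)) f ∈ hookSpan (∑ t, n t) b) :
    LinearMap.trace ℚ (hookSpan (∑ t, n t) b) (((rho n).comp (permAct g)).restrict hW)
      = ((youngGroup n).card : ℚ)⁻¹ * ∑ h ∈ youngGroup n,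
        XX b (h * g) / ((b.factorial : ℚ) * (∑ t, n t : ℕ)) := by
  have hN' : ((∑ t, n t : ℕ) : ℚ) ≠ 0 := by exact_mod_cast hN.ne'
  have hb : (b.factorial : ℚ) ≠ 0 := by exact_mod_cast b.factorial_ne_zero
  have key : ∀ u : Fin (b + 1) → Fin (∑ t, n t),
      ∑ v : Fin (b + 1) → Fin (∑ t, n t),
        (((b.factorial : ℚ) * (∑ t, n t : ℕ))⁻¹ * phi (Fin.tail v) (Vand u)) • Vand v = Vand u := by
    intro u
    rw [← (Fin.consEquiv (fun _ : Fin (b + 1) => Fin (∑ t, n t))).sum_comp, Fintype.sum_prod_type]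
    have h1 : ∀ z : Fin (∑ t, n t), ∑ s : Fin b → Fin (∑ t, n t),
      (((b.factorial : ℚ) * (∑ t, n t : ℕ))⁻¹ *
        phi (Fin.tail (Fin.consEquiv (fun _ : Fin (b + 1) => Fin (∑ t, n t)) (z, s))) (Vand u)) •
          Vand (Fin.consEquiv (fun _ : Fin (b + 1) => Fin (∑ t, n t)) (z, s))
        = ((∑ t, n t : ℕ) : ℚ)⁻¹ • Vand u := by
      intro z
      simp only [mul_smul]
      rw [← Finset.smul_sum]
      have := Vand_repro u z
      simp only [Fin.consEquiv, Equiv.coe_fn_mk, Fin.tail_cons, phi_Vand]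
      rw [this, smul_smul]
      congr 1
      field_simp
    rw [Finset.sum_congr rfl fun z _ => h1 z, Finset.sum_const, Finset.card_univ, Fintype.card_fin,
      ← Nat.cast_smul_eq_nsmul ℚ, smul_smul, mul_inv_cancel₀ hN', one_smul]
  rw [trace_dual (κ := Fin (b + 1) → Fin (∑ t, n t))
    (fun v => (((b.factorial : ℚ) * (∑ t, n t : ℕ))⁻¹ • phi (Fin.tail v)).comp
      (hookSpan (∑ t, n t) b).subtype) (fun v => ⟨Vand v, Vand_mem v⟩)]
  · simp only [LinearMap.comp_apply, Submodule.subtype_apply, LinearMap.coe_restrict_apply,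
      LinearMap.smul_apply, rho, LinearMap.sum_apply, map_sum, map_smul, rename_Vand, smul_eq_mul,
      phi_Vand]
    simp only [XX, Finset.sum_div, Finset.mul_sum]
    rw [Finset.sum_comm]
    refine Finset.sum_congr rfl fun h _ => Finset.sum_congr rfl fun u _ => ?_
    rw [← Function.comp_assoc, ← Equiv.Perm.coe_mul]
    field_simp
  · rintro ⟨x, hx⟩
    apply Subtype.ext
    simp only [LinearMap.comp_apply, Submodule.subtype_apply, LinearMap.smul_apply, smul_eq_mul,
      AddSubmonoidClass.coe_finsetSum, Submodule.coe_smul]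
    induction hx using Submodule.span_induction with
    | mem x hx =>
      obtain ⟨t, ht, rfl⟩ := hx
      obtain ⟨ε, hε, h⟩ := Delta_eq (N := ∑ t, n t) (b := b)
      rw [h]
      conv_rhs => rw [← key t]
      rw [Finset.smul_sum]
      refine Finset.sum_congr rfl fun v _ => ?_
      rw [map_smul, smul_smul, smul_eq_mul]
      congr 1
      ring
    | zero => simp
    | add x y _ _ hx hy =>
      conv_rhs => rw [← hx, ← hy]
      rw [← Finset.sum_add_distrib]
      refine Finset.sum_congr rfl fun v _ => ?_
      rw [map_add, mul_add, add_smul]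
    | smul a x _ hx =>
      conv_rhs => rw [← hx]
      rw [Finset.smul_sum]
      refine Finset.sum_congr rfl fun v _ => ?_
      rw [map_smul, smul_smul, smul_eq_mul]
      congr 1
      ring

end TraceHook
section Comb

set_option linter.unusedSectionVars false
set_option linter.unusedSimpArgs false

variable {α : Type*} [Fintype α] [DecidableEq α] {p : ℕ}

def YG (blk : α → Fin p) : Finset (Equiv.Perm α) :=
  Finset.univ.filter fun w => ∀ a, blk (w a) = blk a

lemma mem_YG {blk : α → Fin p} {w : Equiv.Perm α} : w ∈ YG blk ↔ ∀ a, blk (w a) = blk a := by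
  simp [YG]

lemma blk_swap (blk : α → Fin p) {x y a : α} (h1 : blk x = blk y) :
    blk (Equiv.swap x y a) = blk a := by
  rw [Equiv.swap_apply_def]
  split_ifs with h h'
  · rw [h, h1]
  · rw [h', h1]
  · rfl

lemma YG_trans (blk : α → Fin p) (first : Fin p → α) (hfirst : ∀ j, blk (first j) = j) {c : ℕ}
    (t t' : Fin c → α) (ht : Function.Injective (blk ∘ t)) (htt : blk ∘ t = blk ∘ t') :
    ∃ k ∈ YG blk, k ∘ t = t' := by
  let s := Function.extend (blk ∘ t) t first
  let s' := Function.extend (blk ∘ t) t' first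
  have hsec : ∀ (r : Fin c → α), blk ∘ t = blk ∘ r → ∀ j,
      blk (Function.extend (blk ∘ t) r first j) = j := by
    intro r hr j
    by_cases hj : ∃ i, (blk ∘ t) i = j
    · obtain ⟨i, rfl⟩ := hj
      rw [ht.extend_apply, hr]; rfl
    · rw [Function.extend_apply' _ _ _ hj, hfirst]
  have hs : ∀ j, blk (s j) = j := hsec t rfl
  have hs' : ∀ j, blk (s' j) = j := hsec t' htt
  let f : α → α := fun a => Equiv.swap (s (blk a)) (s' (blk a)) a
  have hf : ∀ a, blk (f a) = blk a := fun a => blk_swap blk (by rw [hs, hs'])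
  have hinv : Function.Involutive f := by
    intro a
    change Equiv.swap (s (blk (f a))) (s' (blk (f a))) (f a) = a
    rw [hf]
    exact Equiv.swap_apply_self _ _ _
  refine ⟨hinv.toPerm f, mem_YG.2 hf, ?_⟩
  ext i
  change Equiv.swap (s (blk (t i))) (s' (blk (t i))) (t i) = t' i
  have e1 : s (blk (t i)) = t i := ht.extend_apply _ _ i
  have e2 : s' (blk (t i)) = t' i := ht.extend_apply _ _ i
  rw [e1, e2, Equiv.swap_apply_left]

def fib (blk : α → Fin p) (j : Fin p) : Finset α := Finset.univ.filter fun a => blk a = j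

lemma YG_count (blk : α → Fin p) (first : Fin p → α) (hfirst : ∀ j, blk (first j) = j) {c : ℕ}
    (t : Fin c → α) (ht : Function.Injective (blk ∘ t)) :
    (∏ i, (fib blk (blk (t i))).card) * ((YG blk).filter fun h : Equiv.Perm α => h ∘ t = t).card
      = (YG blk).card := by
  rw [Finset.card_eq_sum_card_fiberwise (s := YG blk) (f := fun h : Equiv.Perm α => (h ∘ t : Fin c → α))
    (t := Fintype.piFinset fun i => fib blk (blk (t i)))]
  · rw [← Fintype.card_piFinset, ← smul_eq_mul, ← Finset.sum_const]
    refine Finset.sum_congr rfl fun t' ht' => ?_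
    have htt : blk ∘ t = blk ∘ t' := by
      ext1 i
      have := Fintype.mem_piFinset.1 ht' i
      simp [fib] at this
      simp [this]
    obtain ⟨k, hk, hkt⟩ := YG_trans blk first hfirst t t' ht htt
    refine Finset.card_bij (fun h _ => k * h) ?_ ?_ ?_
    · intro h hh
      simp only [Finset.mem_filter, mem_YG] at hh hk ⊢
      refine ⟨fun a => by rw [Equiv.Perm.mul_apply, hk, hh.1], ?_⟩
      rw [Equiv.Perm.coe_mul, Function.comp_assoc, hh.2, hkt]
    · intro a _ b _ hab
      exact mul_left_cancel hab
    · intro h hh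
      simp only [Finset.mem_filter, mem_YG] at hh hk
      refine ⟨k⁻¹ * h, ?_, by simp⟩
      simp only [Finset.mem_filter, mem_YG]
      have hk' : ∀ a, blk (k⁻¹ a) = blk a := fun a => by
        rw [← hk (k⁻¹ a)]; simp
      refine ⟨fun a => by rw [Equiv.Perm.mul_apply, hk', hh.1], ?_⟩
      rw [Equiv.Perm.coe_mul, Function.comp_assoc, hh.2, ← hkt]
      ext i; simp
  · intro h hh
    simp only [Finset.mem_coe, mem_YG] at hh
    simp [fib, hh]

lemma Dmat_zero {c : ℕ} (s : Fin c → α) (u : Fin c → α) (hu : ¬ Function.Injective s) :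
    (Dmat s u).det = 0 := by
  simp only [Function.Injective, not_forall] at hu
  obtain ⟨i, j, hij, hne⟩ := hu
  exact Matrix.det_zero_of_row_eq hne (by
    funext k
    simp [Dmat, hij])

lemma Dmat_ne_zero {c : ℕ} (s : Fin c → α) (u : Fin c → α) (h : (Dmat s u).det ≠ 0) :
    ∃ σ : Equiv.Perm (Fin c), ∀ i, s (σ i) = u i := by
  rw [Matrix.det_apply'] at h
  obtain ⟨σ, _, hσ⟩ := Finset.exists_ne_zero_of_sum_ne_zero h
  refine ⟨σ, fun i => ?_⟩
  have := Finset.prod_ne_zero_iff.1 (right_ne_zero_of_mul hσ) i (Finset.mem_univ i)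
  simpa [Dmat] using this

lemma sum_Dmat (blk : α → Fin p) (first : Fin p → α) (hfirst : ∀ j, blk (first j) = j)
    (nxt : Fin p → Fin p) (hnxt : ∀ j, nxt j ≠ j)
    (hclosed : ∀ J : Finset (Fin p), J.Nonempty → (∀ j ∈ J, nxt j ∈ J) → J = Finset.univ)
    (g : Equiv.Perm α) (hg1 : ∀ j, g (first j) = first (nxt j))
    (hg2 : ∀ a, (∀ j, a ≠ first j) → g a = a) {c : ℕ} (hc : c < p) (t : Fin c → α) :
    ∑ h ∈ YG blk, (Dmat t ((h * g : Equiv.Perm α) ∘ t)).det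
      = if Function.Injective (blk ∘ t) then
          (YG blk).card * ∏ i, (if ∀ j, t i ≠ first j then 1 else 0) /
            ((fib blk (blk (t i))).card : ℚ) else 0 := by
  classical
  have hfinj : ∀ j k, first j = first k → j = k := fun j k h => by
    rw [← hfirst j, ← hfirst k, h]
  by_cases hgt : Function.Injective (blk ∘ g ∘ t)
  · by_cases hnf : ∀ i j, t i ≠ first j
    · have hgt' : g ∘ t = t := by
        ext i
        exact hg2 _ (hnf i)
      rw [hgt'] at hgt
      rw [if_pos hgt]
      have h1 : ∀ h ∈ YG blk, (Dmat t ((h * g : Equiv.Perm α) ∘ t)).det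
          = if h ∘ t = t then 1 else 0 := by
        intro h hh
        rw [mem_YG] at hh
        rw [Equiv.Perm.coe_mul, Function.comp_assoc, hgt']
        have : Dmat t (h ∘ t) = Matrix.diagonal fun i => if h (t i) = t i then (1 : ℚ) else 0 := by
          ext i j
          by_cases hij : i = j
          · subst hij
            simp [Dmat, eq_comm]
          · rw [Matrix.diagonal_apply_ne _ hij]
            simp only [Dmat, Matrix.of_apply, Function.comp_apply]
            rw [if_neg]
            intro h'
            apply hij
            apply hgt
            simp only [Function.comp_apply]
            rw [h', hh]
        rw [this, Matrix.det_diagonal, Finset.prod_ite_zero]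
        simp [funext_iff]
      rw [Finset.sum_congr rfl h1, Finset.sum_boole, ← YG_count blk first hfirst t hgt]
      have h2 : ∀ i, (if ∀ j, t i ≠ first j then (1 : ℚ) else 0) = 1 := fun i => if_pos (hnf i)
      simp only [h2, Finset.prod_div_distrib, Finset.prod_const_one]
      have h3 : (∏ i, ((fib blk (blk (t i))).card : ℚ)) ≠ 0 := by
        rw [Finset.prod_ne_zero_iff]
        intro i _
        have : t i ∈ fib blk (blk (t i)) := by simp [fib]
        exact_mod_cast (Finset.card_pos.2 ⟨_, this⟩).ne'
      push_cast
      field_simp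
    · have hR : ∏ i, (if ∀ j, t i ≠ first j then (1 : ℚ) else 0) /
            ((fib blk (blk (t i))).card : ℚ) = 0 := by
        push Not at hnf
        obtain ⟨i, j, hij⟩ := hnf
        refine Finset.prod_eq_zero (Finset.mem_univ i) ?_
        rw [if_neg (by push Not; exact ⟨j, hij⟩), zero_div]
      rw [hR, mul_zero, ite_self]
      refine Finset.sum_eq_zero fun h hh => ?_
      rw [mem_YG] at hh
      by_contra hne
      obtain ⟨σ, hσ⟩ := Dmat_ne_zero _ _ hne
      have hσ' : ∀ i, blk (t (σ i)) = blk (g (t i)) := fun i => by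
        rw [hσ]; simp [hh]
      have hJ := hclosed (Finset.univ.filter fun j => ∃ i, t i = first j) (by
        push Not at hnf
        obtain ⟨i, j, hij⟩ := hnf
        exact ⟨j, by simpa using ⟨i, hij⟩⟩) (by
        intro j hj
        simp only [Finset.mem_filter, Finset.mem_univ, true_and] at hj ⊢
        obtain ⟨i, hi⟩ := hj
        refine ⟨σ i, ?_⟩
        have h1 := hσ' i
        rw [hi, hg1, hfirst] at h1
        by_cases hf : ∀ k, t (σ i) ≠ first k
        · exfalso
          have h2 := hg2 _ hf
          have : σ i = i := by
            apply hgt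
            simp only [Function.comp_apply]
            rw [h2, h1, hi, hg1, hfirst]
          rw [this, hi, hfirst] at h1
          exact hnxt j h1.symm
        · push Not at hf
          obtain ⟨k, hk⟩ := hf
          rw [hk, hfirst] at h1
          rw [hk, h1])
      have hall : ∀ j, ∃ i, t i = first j := fun j => by
        have : j ∈ (Finset.univ.filter fun j => ∃ i, t i = first j) := by rw [hJ]; simp
        simpa using this
      choose f hf using hall
      have hfi : Function.Injective f := fun j k hjk => hfinj _ _ (by rw [← hf, ← hf, hjk])
      have := Fintype.card_le_of_injective f hfi
      simp at this
      omega
  · have hR : (if Function.Injective (blk ∘ t) then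
          ((YG blk).card : ℚ) * ∏ i, (if ∀ j, t i ≠ first j then (1 : ℚ) else 0) /
            ((fib blk (blk (t i))).card : ℚ) else 0) = 0 := by
      split_ifs with hbt
      · have : ∃ i j, t i = first j := by
          by_contra hcon
          push Not at hcon
          apply hgt
          have hgt' : g ∘ t = t := by
            ext i
            exact hg2 _ (hcon i)
          rwa [hgt']
        obtain ⟨i, j, hij⟩ := this
        rw [Finset.prod_eq_zero (Finset.mem_univ i), mul_zero]
        rw [if_neg (by push Not; exact ⟨j, hij⟩), zero_div]
      · rfl
    rw [hR]
    by_cases hti : Function.Injective t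
    swap
    · exact Finset.sum_eq_zero fun h _ => Dmat_zero _ _ hti
    simp only [Function.Injective, not_forall, Function.comp_apply] at hgt
    obtain ⟨i, j, hij, hne⟩ := hgt
    have hneg : ∑ h ∈ YG blk, (Dmat t ((h * g : Equiv.Perm α) ∘ t)).det
        = ∑ h ∈ YG blk, -(Dmat t ((h * g : Equiv.Perm α) ∘ t)).det := by
      refine Finset.sum_bij' (fun h _ => h * Equiv.swap (g (t i)) (g (t j)))
        (fun h _ => h * Equiv.swap (g (t i)) (g (t j))) ?_ ?_ ?_ ?_ ?_
      · intro h hh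
        rw [mem_YG] at hh ⊢
        intro a
        rw [Equiv.Perm.mul_apply, hh, blk_swap blk hij]
      · intro h hh
        rw [mem_YG] at hh ⊢
        intro a
        rw [Equiv.Perm.mul_apply, hh, blk_swap blk hij]
      · intro h _
        rw [mul_assoc, Equiv.swap_mul_self, mul_one]
      · intro h _
        rw [mul_assoc, Equiv.swap_mul_self, mul_one]
      · intro h _
        have : ((h * Equiv.swap (g (t i)) (g (t j)) * g : Equiv.Perm α) ∘ t)
            = ((h * g : Equiv.Perm α) ∘ t) ∘ Equiv.swap i j := by
          ext k
          simp only [Function.comp_apply, Equiv.Perm.mul_apply]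
          congr 1
          exact ((g.injective.comp hti).swap_apply i j k)
        rw [this, Dmat_perm, Equiv.Perm.sign_swap hne]
        simp
    rw [Finset.sum_neg_distrib] at hneg
    linarith

lemma sum_inj_prod {c : ℕ} (v : Fin p → ℚ) :
    ∑ q : Fin c → Fin p, (if Function.Injective q then ∏ i, v (q i) else 0)
      = c.factorial * esymVal Finset.univ c v := by
  classical
  rw [← Finset.sum_filter, esymVal, Finset.mul_sum]
  rw [← Finset.sum_fiberwise_of_maps_to (s := Finset.univ.filter fun q : Fin c → Fin p =>
    Function.Injective q) (t := (Finset.univ : Finset (Fin p)).powersetCard c)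
    (g := fun q => Finset.univ.image q)]
  · refine Finset.sum_congr rfl fun B hB => ?_
    have hBc := (Finset.mem_powersetCard.1 hB).2
    have h1 : ∀ q ∈ (Finset.univ.filter fun q : Fin c → Fin p => Function.Injective q).filter
        (fun q => Finset.univ.image q = B), ∏ i, v (q i) = ∏ j ∈ B, v j := by
      intro q hq
      simp only [Finset.mem_filter, Finset.mem_univ, true_and] at hq
      rw [← hq.2, Finset.prod_image (fun a _ b _ h => hq.1 h)]
    rw [Finset.sum_congr rfl h1, Finset.sum_const, nsmul_eq_mul]
    congr 2
    let e : Fin c ≃ B := (B.equivFinOfCardEq hBc).symm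
    have h2 : c.factorial = (Finset.univ : Finset (Equiv.Perm (Fin c))).card := by
      simp [Fintype.card_perm]
    rw [h2]
    symm
    refine Finset.card_bij (fun σ _ => fun i => (e (σ i) : Fin p)) ?_ ?_ ?_
    · intro σ _
      simp only [Finset.mem_filter, Finset.mem_univ, true_and]
      refine ⟨fun a b h => σ.injective (e.injective (Subtype.ext h)), ?_⟩
      ext j
      simp only [Finset.mem_image, Finset.mem_univ, true_and]
      constructor
      · rintro ⟨i, rfl⟩
        exact (e (σ i)).2
      · intro hj
        exact ⟨σ.symm (e.symm ⟨j, hj⟩), by simp⟩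
    · intro σ _ τ _ h
      ext1 i
      exact e.injective (Subtype.ext (congrFun h i))
    · intro q hq
      simp only [Finset.mem_filter, Finset.mem_univ, true_and] at hq
      have hmem : ∀ i, q i ∈ B := fun i => by
        rw [← hq.2]; exact Finset.mem_image_of_mem _ (Finset.mem_univ i)
      have hinj : Function.Injective fun i => e.symm ⟨q i, hmem i⟩ := fun a b h => by
        have := e.symm.injective h
        exact hq.1 (congrArg Subtype.val this)
      refine ⟨Equiv.ofBijective _ (Finite.injective_iff_bijective.1 hinj), Finset.mem_univ _, ?_⟩
      ext i
      simp
  · intro q hq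
    replace hq := (Finset.mem_filter.1 hq).2
    simp only [Finset.mem_coe, Finset.mem_powersetCard]
    refine ⟨Finset.subset_univ _, ?_⟩
    rw [Finset.card_image_of_injective _ hq]
    simp

lemma sum_YY (blk : α → Fin p) (first : Fin p → α) (hfirst : ∀ j, blk (first j) = j)
    (nxt : Fin p → Fin p) (hnxt : ∀ j, nxt j ≠ j)
    (hclosed : ∀ J : Finset (Fin p), J.Nonempty → (∀ j ∈ J, nxt j ∈ J) → J = Finset.univ)
    (g : Equiv.Perm α) (hg1 : ∀ j, g (first j) = first (nxt j))
    (hg2 : ∀ a, (∀ j, a ≠ first j) → g a = a) {c : ℕ} (hc : c < p) :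
    ∑ h ∈ YG blk, YY c (h * g) = (YG blk).card * (c.factorial *
      esymVal Finset.univ c (fun j => (((fib blk j).card : ℚ) - 1) / (fib blk j).card)) := by
  classical
  simp only [YY]
  rw [Finset.sum_comm]
  simp only [sum_Dmat blk first hfirst nxt hnxt hclosed g hg1 hg2 hc]
  rw [← sum_inj_prod, ← Finset.sum_fiberwise (Finset.univ : Finset (Fin c → α)) (fun t => blk ∘ t),
    Finset.mul_sum]
  refine Finset.sum_congr rfl fun q _ => ?_
  have hfirstfib : ∀ j, ∑ a ∈ fib blk j, (if ∀ k, a ≠ first k then (1 : ℚ) else 0)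
      = ((fib blk j).card : ℚ) - 1 := by
    intro j
    have : ∀ a ∈ fib blk j, (if ∀ k, a ≠ first k then (1 : ℚ) else 0)
        = 1 - if a = first j then 1 else 0 := by
      intro a ha
      simp only [fib, Finset.mem_filter, Finset.mem_univ, true_and] at ha
      by_cases h : a = first j
      · rw [if_pos h, if_neg (by push Not; exact ⟨j, h⟩)]; norm_num
      · rw [if_neg h, if_pos]
        · norm_num
        · rintro k rfl
          rw [hfirst] at ha
          exact h (by rw [ha])
    rw [Finset.sum_congr rfl this, Finset.sum_sub_distrib, Finset.sum_ite_eq', if_pos]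
    · simp
    · simp [fib, hfirst]
  have hset : (Finset.univ.filter fun t : Fin c → α => blk ∘ t = q)
      = Fintype.piFinset fun i => fib blk (q i) := by
    ext t
    simp [fib, funext_iff, Fintype.mem_piFinset]
  by_cases hq : Function.Injective q
  · rw [if_pos hq]
    calc _ = ∑ t ∈ Finset.univ.filter (fun t : Fin c → α => blk ∘ t = q), ((YG blk).card : ℚ) *
          ∏ i, (if ∀ j, t i ≠ first j then (1 : ℚ) else 0) / ((fib blk (q i)).card : ℚ) := by
          refine Finset.sum_congr rfl fun t ht => ?_
          have ht' := (Finset.mem_filter.1 ht).2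
          subst ht'
          rw [if_pos hq]
          rfl
      _ = _ := by
          rw [← Finset.mul_sum, hset,
            ← Finset.prod_univ_sum (fun i => fib blk (q i)) (fun i a =>
              (if ∀ j, a ≠ first j then (1 : ℚ) else 0) / ((fib blk (q i)).card : ℚ))]
          congr 1
          refine Finset.prod_congr rfl fun i _ => ?_
          rw [← Finset.sum_div, hfirstfib]
  · rw [if_neg hq, mul_zero]
    refine Finset.sum_eq_zero fun t ht => ?_
    have ht' := (Finset.mem_filter.1 ht).2
    subst ht'
    rw [if_neg hq]

end Comb
section Final

lemma esym_identity {p : ℕ} (u : Fin p → ℚ) (hu : ∀ i, u i + 1 ≠ 0) (c : ℕ) :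
    ∑ j ∈ Finset.range (p + 1), (j.choose c : ℚ) * esymVal Finset.univ j u
      = (∏ i, (u i + 1)) * esymVal Finset.univ c (fun i => u i / (u i + 1)) := by
  classical
  have hL : ∑ j ∈ Finset.range (p + 1), (j.choose c : ℚ) * esymVal Finset.univ j u
      = ∑ B : Finset (Fin p), ∑ C ∈ B.powersetCard c, ∏ i ∈ B, u i := by
    have h1 : ∀ B : Finset (Fin p), ∑ C ∈ B.powersetCard c, ∏ i ∈ B, u i
        = (B.card.choose c : ℚ) * ∏ i ∈ B, u i := by
      intro B
      rw [Finset.sum_const, Finset.card_powersetCard, nsmul_eq_mul]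
    simp only [h1]
    rw [← Finset.powerset_univ, Finset.sum_powerset]
    simp only [Finset.card_univ, Fintype.card_fin]
    refine Finset.sum_congr rfl fun j _ => ?_
    rw [esymVal, Finset.mul_sum]
    refine Finset.sum_congr rfl fun B hB => ?_
    rw [(Finset.mem_powersetCard.1 hB).2]
  rw [hL, esymVal, Finset.mul_sum]
  have hR : ∀ C ∈ (Finset.univ : Finset (Fin p)).powersetCard c,
      (∏ i, (u i + 1)) * ∏ i ∈ C, u i / (u i + 1)
        = ∑ B ∈ (Finset.univ : Finset (Finset (Fin p))).filter (fun B => C ⊆ B), ∏ i ∈ B, u i := by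
    intro C _
    have hne : ∏ i ∈ C, (u i + 1) ≠ 0 := Finset.prod_ne_zero_iff.2 fun i _ => hu i
    rw [← Finset.prod_mul_prod_compl C (fun i => u i + 1), Finset.prod_div_distrib]
    have : (∏ i ∈ C, (u i + 1)) * (∏ i ∈ Cᶜ, (u i + 1)) *
        ((∏ i ∈ C, u i) / ∏ i ∈ C, (u i + 1)) = (∏ i ∈ C, u i) * ∏ i ∈ Cᶜ, (u i + 1) := by
      field_simp
    rw [this, Finset.prod_add_one, Finset.mul_sum]
    refine Finset.sum_bij' (fun D _ => C ∪ D) (fun B _ => B \ C) ?_ ?_ ?_ ?_ ?_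
    · intro D _; simp
    · intro B _
      rw [Finset.mem_powerset]
      intro x hx
      simp at hx ⊢
      exact hx.2
    · intro D hD
      rw [Finset.mem_powerset] at hD
      ext x
      have := @hD x
      simp at this ⊢
      tauto
    · intro B hB
      simp at hB
      exact Finset.union_sdiff_of_subset hB
    · intro D hD
      rw [Finset.mem_powerset] at hD
      rw [Finset.prod_union]
      rw [Finset.disjoint_left]
      intro x hx hx'
      have := hD hx'
      simp at this
      exact this hx
  rw [Finset.sum_congr rfl hR]
  rw [Finset.sum_comm']
  intro B C
  simp only [Finset.mem_univ, true_and, Finset.mem_powersetCard, Finset.mem_filter,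
    Finset.subset_univ]

lemma poch_div (b r : ℕ) : poch ((b : ℚ) + 1) r / (r.factorial : ℚ) = ((b + r).choose b : ℚ) := by
  have h : poch ((b : ℚ) + 1) r = ((b + 1).ascFactorial r : ℚ) := by
    rw [poch, Nat.ascFactorial_eq_prod_range]
    push_cast
    rfl
  rw [h, Nat.ascFactorial_eq_factorial_mul_choose, Nat.choose_symm_add]
  have : (r.factorial : ℚ) ≠ 0 := by exact_mod_cast r.factorial_ne_zero
  push_cast
  field_simp

lemma esymVal_zero {p : ℕ} (u : Fin p → ℚ) : esymVal Finset.univ 0 u = 1 := by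
  simp [esymVal]

variable {p : ℕ}

lemma emb_bij (n : Fin p → ℕ) :
    Function.Bijective (fun x : (j : Fin p) × Fin (n j) => emb n x.1 x.2) := by
  rw [Fintype.bijective_iff_injective_and_card]
  refine ⟨?_, by simp⟩
  have key : ∀ (j j' : Fin p) (i : Fin (n j)) (i' : Fin (n j')), j < j' →
      (emb n j i : ℕ) < emb n j' i' := by
    intro j j' i i' hjj
    simp only [emb]
    have hj : j ∉ Finset.univ.filter (fun t => t < j) := by simp
    have h2 : ∑ t ∈ insert j (Finset.univ.filter (fun t => t < j)), n t
        ≤ ∑ t ∈ Finset.univ.filter (fun t => t < j'), n t := by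
      apply Finset.sum_le_sum_of_subset
      intro x hx
      simp only [Finset.mem_insert, Finset.mem_filter, Finset.mem_univ, true_and] at hx ⊢
      rcases hx with rfl | hx
      · exact hjj
      · exact hx.trans hjj
    rw [Finset.sum_insert hj] at h2
    have := i.isLt
    omega
  rintro ⟨j, i⟩ ⟨j', i'⟩ h
  simp only at h
  rcases lt_trichotomy j j' with hl | rfl | hl
  · have := key j j' i i' hl
    rw [h] at this; omega
  · simp only [emb, Fin.mk.injEq] at h
    have : i = i' := Fin.ext (by omega)
    rw [this]
  · have := key j' j i' i hl
    rw [h] at this; omega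

def blkOf (n : Fin p → ℕ) (a : Fin (∑ t, n t)) : Fin p :=
  ((Equiv.ofBijective _ (emb_bij n)).symm a).1

lemma blkOf_emb (n : Fin p → ℕ) (j : Fin p) (i : Fin (n j)) : blkOf n (emb n j i) = j := by
  have : (Equiv.ofBijective _ (emb_bij n)).symm (emb n j i) = ⟨j, i⟩ :=
    (Equiv.ofBijective _ (emb_bij n)).symm_apply_apply ⟨j, i⟩
  rw [blkOf, this]

lemma exists_emb (n : Fin p → ℕ) (a : Fin (∑ t, n t)) : ∃ i, emb n (blkOf n a) i = a :=
  ⟨((Equiv.ofBijective _ (emb_bij n)).symm a).2,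
    (Equiv.ofBijective _ (emb_bij n)).apply_symm_apply a⟩

lemma youngGroup_eq (n : Fin p → ℕ) : youngGroup n = YG (blkOf n) := by
  ext w
  simp only [youngGroup, Finset.mem_filter, Finset.mem_univ, true_and, mem_YG]
  constructor
  · intro h a
    obtain ⟨i, hi⟩ := exists_emb n a
    obtain ⟨i', hi'⟩ := h (blkOf n a) i
    rw [hi] at hi'
    rw [hi', blkOf_emb]
  · intro h j i
    have h1 := h (emb n j i)
    rw [blkOf_emb] at h1
    have h2 := exists_emb n (w (emb n j i))
    rw [h1] at h2
    obtain ⟨i', hi'⟩ := h2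
    exact ⟨i', hi'.symm⟩

lemma card_fib (n : Fin p → ℕ) (j : Fin p) : (fib (blkOf n) j).card = n j := by
  classical
  have : fib (blkOf n) j = Finset.univ.image (emb n j) := by
    ext a
    simp only [fib, Finset.mem_filter, Finset.mem_univ, true_and, Finset.mem_image]
    constructor
    · rintro rfl
      exact exists_emb n a
    · rintro ⟨i, rfl⟩
      exact blkOf_emb n j i
  rw [this, Finset.card_image_of_injective]
  · simp
  · intro i i' h
    simp only [emb, Fin.mk.injEq] at h
    exact Fin.ext (by omega)

lemma mean_XX (n : Fin p → ℕ) (hn : ∀ j, 0 < n j) (g : Equiv.Perm (Fin (∑ t, n t)))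
    (hN : 0 < ∑ t, n t)
    (hY : ∀ c, c < p → ∑ h ∈ youngGroup n, YY c (h * g) = (youngGroup n).card * (c.factorial *
      esymVal Finset.univ c (fun j => ((n j : ℚ) - 1) / n j))) (b : ℕ) (hb : b < p) :
    ((youngGroup n).card : ℚ)⁻¹ * ∑ h ∈ youngGroup n,
        XX b (h * g) / ((b.factorial : ℚ) * (∑ t, n t : ℕ))
      = (∏ i, (n i : ℚ))⁻¹ * ((∑ j ∈ Finset.range p, (j.choose b : ℚ) *
          esymVal Finset.univ (j + 1) (fun i => (n i : ℚ) - 1)) + (-1) ^ b) := by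
  have hN' : ((∑ t, n t : ℕ) : ℚ) ≠ 0 := by exact_mod_cast hN.ne'
  have hG : ((youngGroup n).card : ℚ) ≠ 0 := by
    have : (1 : Equiv.Perm (Fin (∑ t, n t))) ∈ youngGroup n := by
      simp [youngGroup]
    exact_mod_cast (Finset.card_pos.2 ⟨_, this⟩).ne'
  have hpi : (∏ i, (n i : ℚ)) ≠ 0 := Finset.prod_ne_zero_iff.2 fun i _ => by
    exact_mod_cast (hn i).ne'
  have hid : ∀ c, ∑ j ∈ Finset.range p, ((j + 1).choose c : ℚ) *
      esymVal Finset.univ (j + 1) (fun i => (n i : ℚ) - 1) + ((0 : ℕ).choose c : ℚ)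
      = (∏ i, (n i : ℚ)) * esymVal Finset.univ c (fun j => ((n j : ℚ) - 1) / n j) := by
    intro c
    have := esym_identity (fun i => (n i : ℚ) - 1) (fun i => by
      simpa using (hn i).ne') c
    simp only [sub_add_cancel] at this
    rw [← this, Finset.sum_range_succ', esymVal_zero, mul_one]
  induction b with
  | zero =>
    have h0 := hid 0
    simp only [Nat.choose_zero_right, Nat.cast_one, esymVal_zero, mul_one] at h0
    simp only [XX_zero, Fintype.card_fin, Nat.factorial_zero, Nat.cast_one, one_mul, pow_zero,
      Nat.choose_zero_right] at *
    rw [h0, inv_mul_cancel₀ hpi, div_self hN', Finset.sum_const, nsmul_eq_mul, mul_one,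
      inv_mul_cancel₀ hG]
  | succ b ih =>
    have ih' := ih (by omega)
    have hbf : (b.factorial : ℚ) ≠ 0 := by exact_mod_cast b.factorial_ne_zero
    have hb1 : (b : ℚ) + 1 ≠ 0 := by positivity
    have hsplit : ∀ h : Equiv.Perm (Fin (∑ t, n t)),
        XX (b + 1) (h * g) / (((b + 1).factorial : ℚ) * (∑ t, n t : ℕ))
        = YY (b + 1) (h * g) / ((b + 1).factorial : ℚ)
          - XX b (h * g) / ((b.factorial : ℚ) * (∑ t, n t : ℕ)) := by
      intro h
      rw [XX_succ, Nat.factorial_succ, Fintype.card_fin]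
      push_cast at hN' ⊢
      field_simp
    simp only [hsplit]
    rw [Finset.sum_sub_distrib, mul_sub, ih', ← Finset.sum_div, hY (b + 1) hb]
    have h1 := hid (b + 1)
    simp only [Nat.choose_succ_succ, Nat.cast_add, add_mul, Finset.sum_add_distrib,
      Nat.choose_zero_succ, Nat.cast_zero, add_zero] at h1
    have hbf' : ((b + 1).factorial : ℚ) ≠ 0 := by exact_mod_cast (b + 1).factorial_ne_zero
    have h2 : ((youngGroup n).card : ℚ)⁻¹ * ((youngGroup n).card * (((b + 1).factorial : ℚ) *
      esymVal Finset.univ (b + 1) (fun j => ((n j : ℚ) - 1) / n j)) / ((b + 1).factorial : ℚ))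
      = (∏ i, (n i : ℚ))⁻¹ * ((∏ i, (n i : ℚ)) *
        esymVal Finset.univ (b + 1) (fun j => ((n j : ℚ) - 1) / n j)) := by
      field_simp
    rw [h2, ← h1, pow_succ]
    ring

end Final

theorem sphericalFunction_hook_l_eq_p (p b ℓ : ℕ) (n : Fin p → ℕ) (hn : ∀ j, 0 < n j)
    (hm : b + 2 ≤ p) (hℓ : ℓ = p)
    (g : Equiv.Perm (Fin (∑ t, n t)))
    (hg1 : ∀ j k : Fin p, (k : ℕ) = (j : ℕ) + 1 → (k : ℕ) < ℓ →
      g (emb n j ⟨0, hn j⟩) = emb n k ⟨0, hn k⟩)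
    (hg2 : ∀ j j' : Fin p, (j : ℕ) = ℓ - 1 → (j' : ℕ) = 0 →
      g (emb n j ⟨0, hn j⟩) = emb n j' ⟨0, hn j'⟩)
    (hg3 : ∀ a, (∀ j : Fin p, (j : ℕ) < ℓ → a ≠ emb n j ⟨0, hn j⟩) → g a = a)
    (hW : ∀ f ∈ hookSpan (∑ t, n t) b,
      ((rho n).comp (permAct g)) f ∈ hookSpan (∑ t, n t) b) :
    LinearMap.trace ℚ (hookSpan (∑ t, n t) b) (((rho n).comp (permAct g)).restrict hW)
      = (∏ i ∈ firstL p ℓ, (n i : ℚ))⁻¹ *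
        ((∑ k ∈ Finset.range (p - b - 1 + 1),
            poch ((b : ℚ) + 1) (p - b - 1 - k) / (Nat.factorial (p - b - 1 - k)) *
              esymVal (firstL p ℓ) (ℓ - k) (fun i => (n i : ℚ) - 1))
          + (-1 : ℚ) ^ b) := by
  subst hℓ
  have hF : firstL ℓ ℓ = Finset.univ := by
    ext i; simp [firstL]
  have hN : 0 < ∑ t, n t :=
    lt_of_lt_of_le (hn ⟨0, by omega⟩)
      (Finset.single_le_sum (f := n) (fun _ _ => Nat.zero_le _) (Finset.mem_univ _))
  have hp : 0 < ℓ := by omega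
  have hY : ∀ c, c < ℓ → ∑ h ∈ youngGroup n, YY c (h * g) = (youngGroup n).card * (c.factorial *
      esymVal Finset.univ c (fun j => ((n j : ℚ) - 1) / n j)) := by
    intro c hc
    have := sum_YY (blkOf n) (fun j => emb n j ⟨0, hn j⟩) (fun j => blkOf_emb n j _)
      (fun j => ⟨((j : ℕ) + 1) % ℓ, Nat.mod_lt _ hp⟩) (by
        intro j h
        have h1 := congrArg Fin.val h
        simp only at h1
        have := j.isLt
        by_cases hj : (j : ℕ) + 1 < ℓ
        · rw [Nat.mod_eq_of_lt hj] at h1; omega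
        · have : (j : ℕ) + 1 = ℓ := by omega
          rw [this, Nat.mod_self] at h1; omega) (by
        intro J ⟨j₀, hj₀⟩ hcl
        have hk : ∀ k : ℕ, (⟨((j₀ : ℕ) + k) % ℓ, Nat.mod_lt _ hp⟩ : Fin ℓ) ∈ J := by
          intro k
          induction k with
          | zero =>
            have : (⟨((j₀ : ℕ) + 0) % ℓ, Nat.mod_lt _ hp⟩ : Fin ℓ) = j₀ :=
              Fin.ext (by simp [Nat.mod_eq_of_lt j₀.isLt])
            rw [this]; exact hj₀
          | succ k ih =>
            have h1 := hcl _ ih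
            have : (⟨((j₀ : ℕ) + (k + 1)) % ℓ, Nat.mod_lt _ hp⟩ : Fin ℓ)
                = ⟨(((j₀ : ℕ) + k) % ℓ + 1) % ℓ, Nat.mod_lt _ hp⟩ :=
              Fin.ext (by simp [Nat.mod_add_mod, add_assoc])
            rw [this]; exact h1
        ext j
        simp only [Finset.mem_univ, iff_true]
        have h1 := hk (ℓ - j₀ + j)
        have : (⟨((j₀ : ℕ) + (ℓ - j₀ + j)) % ℓ, Nat.mod_lt _ hp⟩ : Fin ℓ) = j := by
          apply Fin.ext
          have h2 := j₀.isLt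
          have h3 : (j₀ : ℕ) + (ℓ - j₀ + j) = ℓ + j := by omega
          simp only [h3, Nat.add_mod_left, Nat.mod_eq_of_lt j.isLt]
        rwa [this] at h1) g (by
        intro j
        have := j.isLt
        by_cases hj : (j : ℕ) + 1 < ℓ
        · exact hg1 j _ (Nat.mod_eq_of_lt hj) (Nat.mod_lt _ hp)
        · have : (j : ℕ) + 1 = ℓ := by omega
          exact hg2 j _ (by omega) (by simp only [this, Nat.mod_self])) (by
        intro a ha
        exact hg3 a fun j _ => ha j) hc
    rw [youngGroup_eq, this]
    simp only [card_fib]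
  rw [trace_hook ℓ b n hN g hW, mean_XX n hn g hN hY b (by omega), hF]
  congr 2
  rw [← Finset.sum_range_reflect]
  have hle : ℓ - b - 1 + 1 ≤ ℓ := by omega
  rw [← Finset.sum_subset (Finset.range_subset_range.2 hle)]
  · refine Finset.sum_congr rfl fun k hk => ?_
    rw [Finset.mem_range] at hk
    rw [poch_div]
    congr 2
    · congr 1
      omega
    · omega
  · intro k hk' hk
    rw [Finset.mem_range] at hk hk'
    rw [Nat.choose_eq_zero_of_lt (by omega)]
    simp

end
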